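/- arXiv:1308.5695 — 3 statements merged into one kernel-verified Lean document; each statement's English description precedes it below -/
import Mathlib

section
/- Let n ≥ 1 and q < 0, and let μ be a σ-finite q-homogeneous Borel measure on ℝⁿ. Let A, B ⊆ ℝⁿ be Borel sets with μ(ℝⁿ∖A), μ(ℝⁿ∖B) ∈ (0,∞), and assume B is open and contains the origin. If for some λ ∈ (0,1), μ(ℝⁿ∖(λA+(1−λ)B)) = (λ·μ(ℝⁿ∖A)^q + (1−λ)·μ(ℝⁿ∖B)^q)^{1/q}, then there exists m > 0 such that A and mB coincide up to a set of zero μ-measure, i.e. μ(A∖mB) = μ(mB∖A) = 0. -/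
open MeasureTheory Set Filter
open scoped Pointwise ENNReal

/-- One-dimensional Brunn-Minkowski inequality for compact sets. -/
lemma Real.volume_add_volume_le_of_isCompact {K L : Set ℝ} (hK : IsCompact K) (hL : IsCompact L)
    (hK₀ : K.Nonempty) (hL₀ : L.Nonempty) : volume K + volume L ≤ volume (K + L) := by
  obtain ⟨a, haK, ha⟩ := hK.exists_isGreatest hK₀
  obtain ⟨b, hbL, hb⟩ := hL.exists_isLeast hL₀
  have hinter : volume ((fun x => x + b) '' K ∩ (fun y => a + y) '' L) = 0 := by
    refine measure_mono_null (t := {a + b}) ?_ (measure_singleton _)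
    rintro _ ⟨⟨x, hx, rfl⟩, y, hy, hxy⟩
    have h₁ := ha hx
    have h₂ := hb hy
    simp only [mem_singleton_iff] at hxy ⊢
    linarith
  have hLm : MeasurableSet ((fun y => a + y) '' L) :=
    (hL.image (continuous_const_add a)).measurableSet
  calc volume K + volume L
      = volume ((fun x => x + b) '' K) + volume ((fun y => a + y) '' L) := by
        simp [image_add_right, image_add_left]
    _ = volume ((fun x => x + b) '' K ∪ (fun y => a + y) '' L) := by
        rw [← measure_union_add_inter _ hLm, hinter, add_zero]
    _ ≤ volume (K + L) := by
        refine measure_mono (union_subset ?_ ?_)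
        · rintro _ ⟨x, hx, rfl⟩
          exact add_mem_add hx hbL
        · rintro _ ⟨y, hy, rfl⟩
          exact add_mem_add haK hy

/-- One-dimensional Brunn-Minkowski inequality. -/
lemma Real.volume_add_volume_le {X Y : Set ℝ} (hX : MeasurableSet X) (hY : MeasurableSet Y)
    (hX₀ : X.Nonempty) (hY₀ : Y.Nonempty) : volume X + volume Y ≤ volume (X + Y) := by
  obtain ⟨x, hx⟩ := hX₀
  obtain ⟨y, hy⟩ := hY₀
  rw [hX.measure_eq_iSup_isCompact, hY.measure_eq_iSup_isCompact]
  simp only [iSup_and']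
  refine ENNReal.biSup_add_biSup_le' (p := fun K => K ⊆ X ∧ IsCompact K)
    (q := fun L => L ⊆ Y ∧ IsCompact L)
    ⟨{x}, by simpa using hx, isCompact_singleton⟩ ⟨{y}, by simpa using hy, isCompact_singleton⟩
    fun K hK L hL => ?_
  calc volume K + volume L ≤ volume (insert x K) + volume (insert y L) := by
        gcongr <;> exact subset_insert _ _
    _ ≤ volume (insert x K + insert y L) :=
        Real.volume_add_volume_le_of_isCompact (hK.2.insert x) (hL.2.insert y)
          (insert_nonempty _ _) (insert_nonempty _ _)
    _ ≤ volume (X + Y) := by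
        gcongr <;> exact insert_subset ‹_› (And.left ‹_›)

/-- Brunn-Minkowski inequality for complements in the unit interval. -/
lemma Real.volume_Ioo_compl_le {S T C : Set ℝ} (hS : MeasurableSet S) (hT : MeasurableSet T)
    (hC : MeasurableSet C) (hS₀ : (S ∩ Ioo 0 1).Nonempty) (hT₀ : (T ∩ Ioo 0 1).Nonempty)
    {l : ℝ} (hl : l ∈ Ioo (0 : ℝ) 1)
    (hST : ∀ s ∈ S, ∀ t ∈ T, l * s + (1 - l) * t ∈ C) :
    volume.restrict (Ioo (0 : ℝ) 1) Cᶜ ≤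
      ENNReal.ofReal l * volume.restrict (Ioo (0 : ℝ) 1) Sᶜ +
        ENNReal.ofReal (1 - l) * volume.restrict (Ioo (0 : ℝ) 1) Tᶜ := by
  have hl' : 0 < 1 - l := sub_pos.2 hl.2
  have : IsProbabilityMeasure (volume.restrict (Ioo (0 : ℝ) 1)) := ⟨by simp⟩
  have key : ENNReal.ofReal l * volume.restrict (Ioo (0 : ℝ) 1) S +
      ENNReal.ofReal (1 - l) * volume.restrict (Ioo (0 : ℝ) 1) T ≤
      volume.restrict (Ioo (0 : ℝ) 1) C := by
    have hm := Real.volume_add_volume_le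
      ((hS.inter measurableSet_Ioo).const_smul₀ l) ((hT.inter measurableSet_Ioo).const_smul₀ (1 - l))
      (hS₀.smul_set (a := l)) (hT₀.smul_set (a := 1 - l))
    rw [Measure.addHaar_smul_of_nonneg _ hl.1.le, Measure.addHaar_smul_of_nonneg _ hl'.le] at hm
    simp only [Module.finrank_self, pow_one] at hm
    rw [Measure.restrict_apply hS, Measure.restrict_apply hT, Measure.restrict_apply hC]
    refine hm.trans (measure_mono ?_)
    rintro _ ⟨_, ⟨s, hs, rfl⟩, _, ⟨t, ht, rfl⟩, rfl⟩
    refine ⟨hST s hs.1 t ht.1, ?_⟩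
    exact (convex_Ioo (0 : ℝ) 1) hs.2 ht.2 hl.1.le hl'.le (by ring)
  rw [← ENNReal.toReal_le_toReal (by finiteness) (by finiteness)] at key ⊢
  rw [ENNReal.toReal_add (by finiteness) (by finiteness)] at key ⊢
  simp only [ENNReal.toReal_mul, ENNReal.toReal_ofReal hl.1.le, ENNReal.toReal_ofReal hl'.le,
    ← measureReal_def, probReal_compl_eq_one_sub hS, probReal_compl_eq_one_sub hT,
    probReal_compl_eq_one_sub hC] at key ⊢
  linarith

/-- A function on the unit interval whose averages over `(0, u)` vanish for almost every `u`
vanishes almost everywhere. -/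
lemma ae_eq_zero_of_ae_integral_mul_eq_zero {f : ℝ → ℝ} (hf : LocallyIntegrable f)
    (h : ∀ᵐ u ∂volume.restrict (Ioo (0 : ℝ) 1), ∫ c in (0 : ℝ)..1, f (c * u) = 0) :
    ∀ᵐ u ∂volume.restrict (Ioo (0 : ℝ) 1), f u = 0 := by
  have hint (a b : ℝ) : IntervalIntegrable f volume a b := by
    exact (hf.integrableOn_isCompact isCompact_uIcc).intervalIntegrable
  have hcont : Continuous fun u => ∫ c in (0 : ℝ)..u, f c :=
    intervalIntegral.continuous_primitive hint 0
  have hae : (fun u => ∫ c in (0 : ℝ)..u, f c) =ᵐ[volume.restrict (Ioo (0 : ℝ) 1)] fun _ => 0 := by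
    filter_upwards [h, ae_restrict_mem measurableSet_Ioo] with u hu hu₀
    rw [intervalIntegral.integral_comp_mul_right _ hu₀.1.ne'] at hu
    simpa [hu₀.1.ne'] using hu
  have hzero := Measure.eqOn_open_of_ae_eq hae isOpen_Ioo hcont.continuousOn continuousOn_const
  filter_upwards [ae_restrict_of_ae (LocallyIntegrable.ae_hasDerivAt_integral hf),
    ae_restrict_mem measurableSet_Ioo] with u hu hu₀
  refine (hu 0).unique ((hasDerivAt_const u (0 : ℝ)).congr_of_eventuallyEq ?_)
  filter_upwards [isOpen_Ioo.mem_nhds hu₀] with v hv using hzero hv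

section Homogeneous

variable {E : Type*} [AddCommGroup E] [Module ℝ E] [MeasurableSpace E]
  {μ : Measure E} {p : ℝ}

/-- If `A` has cofinite homogeneous measure, almost every open segment `(0, x)` meets `A`. -/
lemma ae_exists_smul_mem_of_homogeneous (hp : p < 0)
    (hμ : ∀ A, MeasurableSet A → ∀ c : ℝ, 0 < c → μ (c • A) = ENNReal.ofReal (c ^ p) * μ A)
    {A : Set E} (hA : MeasurableSet A) (hfin : μ Aᶜ ≠ ∞) :
    ∀ᵐ x ∂μ, ∃ c ∈ Ioo (0 : ℝ) 1, c • x ∈ A := by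
  rw [ae_iff]
  push Not
  have hlim : Tendsto (fun t : ℝ => ENNReal.ofReal (t ^ p) * μ Aᶜ) atTop (nhds 0) := by
    have h := ENNReal.tendsto_ofReal (tendsto_rpow_neg_atTop (neg_pos.2 hp))
    simpa using ENNReal.Tendsto.mul_const h (Or.inr hfin)
  refine le_antisymm (ge_of_tendsto hlim ?_) zero_le
  filter_upwards [eventually_gt_atTop (1 : ℝ)] with t ht
  have ht₀ : 0 < t := one_pos.trans ht
  rw [← hμ _ hA.compl t ht₀]
  refine measure_mono fun x hx => ?_
  rw [mem_smul_set_iff_inv_smul_mem₀ ht₀.ne']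
  exact hx t⁻¹ ⟨inv_pos.2 ht₀, inv_lt_one_of_one_lt₀ ht⟩

variable [MeasurableSMul₂ ℝ E]

lemma lintegral_smul_of_homogeneous
    (hμ : ∀ A, MeasurableSet A → ∀ c : ℝ, 0 < c → μ (c • A) = ENNReal.ofReal (c ^ p) * μ A)
    {g : E → ℝ≥0∞} (hg : Measurable g) {c : ℝ} (hc : 0 < c) :
    ∫⁻ x, g (c • x) ∂μ = ENNReal.ofReal (c ^ (-p)) * ∫⁻ x, g x ∂μ := by
  have hmap : μ.map (c • ·) = ENNReal.ofReal (c ^ (-p)) • μ := by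
    ext s hs
    rw [Measure.map_apply (measurable_const_smul c) hs, preimage_smul₀ hc.ne',
      hμ s hs _ (inv_pos.2 hc), Measure.smul_apply, smul_eq_mul, Real.inv_rpow hc.le,
      Real.rpow_neg hc.le]
  rw [← lintegral_map hg (measurable_const_smul c), hmap, lintegral_smul_measure, smul_eq_mul]

/-- A homogeneous measure is a mixture of Lebesgue measures on the segments `(0, x)`. -/
lemma lintegral_lintegral_smul_of_homogeneous [SFinite μ]
    (hμ : ∀ A, MeasurableSet A → ∀ c : ℝ, 0 < c → μ (c • A) = ENNReal.ofReal (c ^ p) * μ A)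
    {g : E → ℝ≥0∞} (hg : Measurable g) :
    ∫⁻ x, (∫⁻ c in Ioo (0 : ℝ) 1, g (c • x)) ∂μ =
      (∫⁻ c in Ioo (0 : ℝ) 1, ENNReal.ofReal (c ^ (-p))) * ∫⁻ x, g x ∂μ := by
  rw [lintegral_lintegral_swap (by fun_prop), ← lintegral_mul_const _ (by fun_prop)]
  exact setLIntegral_congr_fun measurableSet_Ioo fun c hc =>
    lintegral_smul_of_homogeneous hμ hg hc.1

lemma lintegral_Ioo_rpow_ne_zero (r : ℝ) :
    ∫⁻ c in Ioo (0 : ℝ) 1, ENNReal.ofReal (c ^ r) ≠ 0 := by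
  rw [← pos_iff_ne_zero, setLIntegral_pos_iff (by fun_prop)]
  refine lt_of_lt_of_le (b := volume (Ioo (0 : ℝ) 1)) (by simp) (measure_mono fun c hc => ⟨?_, hc⟩)
  simpa using Real.rpow_pos_of_pos hc.1 r

lemma lintegral_Ioo_rpow_ne_top {r : ℝ} (hr : 0 ≤ r) :
    ∫⁻ c in Ioo (0 : ℝ) 1, ENNReal.ofReal (c ^ r) ≠ ∞ := by
  refine ne_top_of_le_ne_top (b := ∫⁻ _ in Ioo (0 : ℝ) 1, 1) (by simp)
    (setLIntegral_mono measurable_const fun c hc => ?_)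
  simpa using Real.rpow_le_one hc.1.le hc.2.le hr

lemma lintegral_measure_preimage_smul_of_homogeneous [SFinite μ]
    (hμ : ∀ A, MeasurableSet A → ∀ c : ℝ, 0 < c → μ (c • A) = ENNReal.ofReal (c ^ p) * μ A)
    {N : Set E} (hN : MeasurableSet N) :
    ∫⁻ x, volume.restrict (Ioo (0 : ℝ) 1) ((· • x) ⁻¹' N) ∂μ =
      (∫⁻ c in Ioo (0 : ℝ) 1, ENNReal.ofReal (c ^ (-p))) * μ N := by
  rw [← lintegral_indicator_one hN, ← lintegral_lintegral_smul_of_homogeneous hμ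
    (measurable_one.indicator hN)]
  refine lintegral_congr fun x => ?_
  rw [← lintegral_indicator_one ((measurable_smul_const x) hN)]
  rfl

lemma measurable_measure_preimage_smul {N : Set E} (hN : MeasurableSet N) :
    Measurable fun x : E => volume.restrict (Ioo (0 : ℝ) 1) ((· • x) ⁻¹' N) :=
  measurable_measure_prodMk_left (s := (fun z : E × ℝ => z.2 • z.1) ⁻¹' N)
    ((measurable_snd.smul measurable_fst) hN)

lemma ae_ae_smul_iff_of_homogeneous [SFinite μ]
    (hμ : ∀ A, MeasurableSet A → ∀ c : ℝ, 0 < c → μ (c • A) = ENNReal.ofReal (c ^ p) * μ A)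
    {P : E → Prop} (hP : MeasurableSet {x | P x}) :
    (∀ᵐ x ∂μ, ∀ᵐ c ∂volume.restrict (Ioo (0 : ℝ) 1), P (c • x)) ↔ ∀ᵐ x ∂μ, P x := by
  have h := lintegral_measure_preimage_smul_of_homogeneous hμ hP.compl
  rw [ae_iff (p := P)]
  change _ ↔ μ {x | P x}ᶜ = 0
  rw [← mul_eq_zero_iff_left (lintegral_Ioo_rpow_ne_zero (-p)), ← h,
    lintegral_eq_zero_iff (measurable_measure_preimage_smul hP.compl)]
  rfl

/-- Equality in the linearised complemented Brunn-Minkowski inequality forces the sets to agree. -/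
theorem ae_mem_iff_of_measure_compl_eq [SFinite μ] (hp : p < 0)
    (hμ : ∀ A, MeasurableSet A → ∀ c : ℝ, 0 < c → μ (c • A) = ENNReal.ofReal (c ^ p) * μ A)
    {A B C : Set E} (hA : MeasurableSet A) (hB : MeasurableSet B) (hC : MeasurableSet C)
    (hAfin : μ Aᶜ ≠ ∞) (hBfin : μ Bᶜ ≠ ∞) {l : ℝ} (hl : l ∈ Ioo (0 : ℝ) 1)
    (hABC : ∀ a ∈ A, ∀ b ∈ B, l • a + (1 - l) • b ∈ C)
    (heq : μ Cᶜ = ENNReal.ofReal l * μ Aᶜ + ENNReal.ofReal (1 - l) * μ Bᶜ) :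
    ∀ᵐ x ∂μ, x ∈ A ↔ x ∈ B := by
  have hl' : 0 < 1 - l := sub_pos.2 hl.2
  set ν : Measure ℝ := volume.restrict (Ioo (0 : ℝ) 1) with hν
  have hνp : IsProbabilityMeasure ν := ⟨by simp [hν]⟩
  have hle : ∀ᵐ x ∂μ, ν ((· • x) ⁻¹' Cᶜ) ≤
      ENNReal.ofReal l * ν ((· • x) ⁻¹' Aᶜ) + ENNReal.ofReal (1 - l) * ν ((· • x) ⁻¹' Bᶜ) := by
    filter_upwards [ae_exists_smul_mem_of_homogeneous hp hμ hA hAfin,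
      ae_exists_smul_mem_of_homogeneous hp hμ hB hBfin] with x hxA hxB
    obtain ⟨s, hs, hsA⟩ := hxA
    obtain ⟨t, ht, htB⟩ := hxB
    refine Real.volume_Ioo_compl_le (measurable_smul_const x hA) (measurable_smul_const x hB)
      (measurable_smul_const x hC) ⟨s, hsA, hs⟩ ⟨t, htB, ht⟩ hl fun s hs t ht => ?_
    simpa [add_smul, mul_smul] using hABC _ hs _ ht
  have hK := lintegral_Ioo_rpow_ne_top (neg_nonneg.2 hp.le)
  have hCfin : μ Cᶜ ≠ ∞ := by rw [heq]; finiteness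
  have hmA := measurable_measure_preimage_smul hA.compl
  have hmB := measurable_measure_preimage_smul hB.compl
  have hGeq := ae_eq_of_ae_le_of_lintegral_le hle
    (by rw [lintegral_measure_preimage_smul_of_homogeneous hμ hC.compl]; finiteness)
    ((hmA.const_mul _).add (hmB.const_mul _)).aemeasurable (by
      rw [lintegral_add_left (hmA.const_mul _), lintegral_const_mul _ hmA, lintegral_const_mul _ hmB,
        lintegral_measure_preimage_smul_of_homogeneous hμ hA.compl,
        lintegral_measure_preimage_smul_of_homogeneous hμ hB.compl,
        lintegral_measure_preimage_smul_of_homogeneous hμ hC.compl, heq]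
      apply le_of_eq
      ring)
  let F : E → ℝ := fun x => l * Aᶜ.indicator 1 x + (1 - l) * Bᶜ.indicator 1 x - Cᶜ.indicator 1 x
  have hFm : Measurable F :=
    (((measurable_one.indicator hA.compl).const_mul _).add
      ((measurable_one.indicator hB.compl).const_mul _)).sub (measurable_one.indicator hC.compl)
  have hFb (x : E) : ‖F x‖ ≤ 1 := by
    rw [Real.norm_eq_abs, abs_le]
    by_cases h₁ : x ∈ A <;> by_cases h₂ : x ∈ B <;> by_cases h₃ : x ∈ C <;>
      simp [F, h₁, h₂, h₃] <;> constructor <;> linarith [hl.1]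
  have hind (x : E) {N : Set E} (hN : MeasurableSet N) :
      Integrable (fun c : ℝ => N.indicator (1 : E → ℝ) (c • x)) ν ∧
        ∫ c, N.indicator (1 : E → ℝ) (c • x) ∂ν = ν.real ((· • x) ⁻¹' N) := by
    have hN' := measurable_smul_const (M := ℝ) x hN
    exact ⟨(integrable_indicator_iff hN').2 (integrable_const 1).integrableOn,
      integral_indicator_one hN'⟩
  have hFint : ∀ᵐ x ∂μ, ∫ c in (0 : ℝ)..1, F (c • x) = 0 := by
    filter_upwards [hGeq] with x hx
    have hx' := congrArg ENNReal.toReal hx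
    rw [ENNReal.toReal_add (by finiteness) (by finiteness)] at hx'
    simp only [ENNReal.toReal_mul, ENNReal.toReal_ofReal hl.1.le, ENNReal.toReal_ofReal hl'.le,
      ← measureReal_def] at hx'
    rw [intervalIntegral.integral_of_le zero_le_one, integral_Ioc_eq_integral_Ioo]
    change ∫ c, (l * Aᶜ.indicator 1 (c • x) + (1 - l) * Bᶜ.indicator 1 (c • x)
      - Cᶜ.indicator 1 (c • x)) ∂ν = 0
    have hiA := (hind x hA.compl).1.const_mul l
    have hiB := (hind x hB.compl).1.const_mul (1 - l)
    rw [integral_sub (by exact hiA.add hiB) (hind x hC.compl).1, integral_add hiA hiB,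
      integral_const_mul, integral_const_mul, (hind x hA.compl).2, (hind x hB.compl).2,
      (hind x hC.compl).2, hx', sub_self]
  have hFint_meas : MeasurableSet {x | ∫ c in (0 : ℝ)..1, F (c • x) = 0} := by
    have hsm : StronglyMeasurable (Function.uncurry fun (x : E) (c : ℝ) => F (c • x)) :=
      (hFm.comp (measurable_snd.smul measurable_fst)).stronglyMeasurable
    simp only [intervalIntegral.integral_of_le zero_le_one]
    exact hsm.integral_prod_right.measurable (measurableSet_singleton 0)
  have hFzero : ∀ᵐ x ∂μ, F x = 0 := by
    refine (ae_ae_smul_iff_of_homogeneous hμ (hFm (measurableSet_singleton 0))).1 ?_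
    filter_upwards [(ae_ae_smul_iff_of_homogeneous hμ hFint_meas).2 hFint] with x hx
    refine ae_eq_zero_of_ae_integral_mul_eq_zero (f := fun c => F (c • x)) ?_ ?_
    · refine (locallyIntegrable_const (1 : ℝ)).mono
        (hFm.comp (measurable_smul_const x)).aestronglyMeasurable (ae_of_all _ fun c => ?_)
      simpa using hFb (c • x)
    · simpa only [mul_smul] using hx
  filter_upwards [hFzero] with x hx
  by_cases h₁ : x ∈ A <;> by_cases h₂ : x ∈ B <;> by_cases h₃ : x ∈ C <;>
    simp [F, h₁, h₂, h₃] at hx ⊢ <;> linarith [hl.1]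

end Homogeneous

lemma smul_set_compl_of_ne_zero {G α : Type*} [GroupWithZero G] [MulAction G α] {c : G}
    (hc : c ≠ 0) (s : Set α) : c • sᶜ = (c • s)ᶜ := by
  rw [compl_eq_univ_sdiff, compl_eq_univ_sdiff, smul_set_sdiff₀ hc, smul_set_univ₀ hc]

/-- equality case in the `q`-complemented Brunn--Minkowski inequality for a
σ-finite `q`-homogeneous measure, `q < 0`: if `B` is open and contains the origin and
equality holds, then `A` and `mB` coincide up to zero `μ`-measure for some `m > 0`. -/
theorem stmt13 (n : ℕ) (hn : 1 ≤ n) (q : ℝ) (hq : q < 0)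
    (μ : Measure (Fin n → ℝ)) (hσ : SigmaFinite μ)
    (hhom : ∀ A : Set (Fin n → ℝ), MeasurableSet A → ∀ c : ℝ, 0 < c →
      μ (c • A) = ENNReal.ofReal (c ^ (1 / q)) * μ A)
    (A B : Set (Fin n → ℝ)) (hA : MeasurableSet A)
    (hBopen : IsOpen B) (h0B : (0 : Fin n → ℝ) ∈ B)
    (hAc0 : 0 < μ Aᶜ) (hAcfin : μ Aᶜ < ⊤) (hBc0 : 0 < μ Bᶜ) (hBcfin : μ Bᶜ < ⊤)
    (lam : ℝ) (hlam : lam ∈ Set.Ioo (0 : ℝ) 1)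
    (heq : μ ((lam • A + (1 - lam) • B)ᶜ) =
      (ENNReal.ofReal lam * μ Aᶜ ^ q + ENNReal.ofReal (1 - lam) * μ Bᶜ ^ q) ^ (1 / q)) :
    ∃ m : ℝ, 0 < m ∧ μ (A \ m • B) = 0 ∧ μ (m • B \ A) = 0 := by
  have hl := hlam.1
  have hl' : 0 < 1 - lam := sub_pos.2 hlam.2
  have hp : 1 / q < 0 := one_div_neg.2 hq
  -- `s` and `t` are the scales for which `s⁻¹ • A` and `t⁻¹ • B` have complements of measure one.
  have hscale {X : Set (Fin n → ℝ)} (hX : MeasurableSet X) (h0 : 0 < μ Xᶜ) (hfin : μ Xᶜ < ⊤) :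
      ∃ s : ℝ, 0 < s ∧ μ Xᶜ ^ q = ENNReal.ofReal s ∧ μ (s⁻¹ • X)ᶜ = 1 := by
    have h0' : 0 < (μ Xᶜ).toReal := ENNReal.toReal_pos h0.ne' hfin.ne
    have hs : 0 < (μ Xᶜ).toReal ^ q := Real.rpow_pos_of_pos h0' q
    refine ⟨_, hs, ?_, ?_⟩
    · rw [← ENNReal.ofReal_rpow_of_pos h0', ENNReal.ofReal_toReal hfin.ne]
    · rw [← smul_set_compl_of_ne_zero (inv_pos.2 hs).ne', hhom _ hX.compl _ (inv_pos.2 hs),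
        Real.inv_rpow hs.le, ← Real.rpow_mul h0'.le, mul_one_div_cancel hq.ne, Real.rpow_one,
        ENNReal.ofReal_inv_of_pos h0', ENNReal.ofReal_toReal hfin.ne,
        ENNReal.inv_mul_cancel h0.ne' hfin.ne]
  obtain ⟨s, hs, hsA, hA1⟩ := hscale hA hAc0 hAcfin
  obtain ⟨t, ht, htB, hB1⟩ := hscale hBopen.measurableSet hBc0 hBcfin
  have hκ : 0 < lam * s + (1 - lam) * t := by positivity
  set κ := lam * s + (1 - lam) * t with hκ_def
  have hDopen : IsOpen (lam • A + (1 - lam) • B) := (hBopen.smul₀ hl'.ne').add_left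
  have hD : μ (κ⁻¹ • (lam • A + (1 - lam) • B))ᶜ = 1 := by
    rw [hsA, htB, ← ENNReal.ofReal_mul hl.le, ← ENNReal.ofReal_mul hl'.le,
      ← ENNReal.ofReal_add (by positivity) (by positivity), ← hκ_def,
      ENNReal.ofReal_rpow_of_pos hκ] at heq
    rw [← smul_set_compl_of_ne_zero (inv_pos.2 hκ).ne',
      hhom _ hDopen.measurableSet.compl _ (inv_pos.2 hκ), heq, ← ENNReal.ofReal_mul (by positivity), Real.inv_rpow hκ.le,
      inv_mul_cancel₀ (Real.rpow_pos_of_pos hκ _).ne', ENNReal.ofReal_one]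
  have hl₁ : 1 - lam * s / κ = (1 - lam) * t / κ := by
    field_simp
    rw [hκ_def]
    ring
  have hlκ : lam * s / κ ∈ Ioo (0 : ℝ) 1 :=
    ⟨by positivity, by rw [← sub_pos, hl₁]; positivity⟩
  have hae := ae_mem_iff_of_measure_compl_eq hp hhom (hA.const_smul₀ s⁻¹)
    (hBopen.measurableSet.const_smul₀ t⁻¹) (hDopen.measurableSet.const_smul₀ κ⁻¹)
    (by simp [hA1]) (by simp [hB1]) hlκ
    (by
      rintro _ ⟨a, ha, rfl⟩ _ ⟨b, hb, rfl⟩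
      refine ⟨lam • a + (1 - lam) • b, add_mem_add (smul_mem_smul_set ha) (smul_mem_smul_set hb), ?_⟩
      rw [hl₁]
      simp only [smul_add, smul_smul]
      congr 2 <;> field_simp)
    (by
      rw [hA1, hB1, hD, mul_one, mul_one, ← ENNReal.ofReal_add hlκ.1.le (sub_pos.2 hlκ.2).le]
      simp)
  have hnull {X Y : Set (Fin n → ℝ)} (hX : MeasurableSet X) (hY : MeasurableSet Y)
      (h : μ (s⁻¹ • (X \ Y)) = 0) : μ (X \ Y) = 0 := by
    rw [hhom _ (hX.diff hY) _ (inv_pos.2 hs)] at h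
    refine (mul_eq_zero.1 h).resolve_left ?_
    simpa using Real.rpow_pos_of_pos (inv_pos.2 hs) _
  have hB' : MeasurableSet ((s / t) • B) := hBopen.measurableSet.const_smul₀ _
  have hsB : s⁻¹ • (s / t) • B = t⁻¹ • B := by
    rw [smul_smul]
    congr 1
    field_simp
  refine ⟨s / t, div_pos hs ht, hnull hA hB' ?_, hnull hB' hA ?_⟩
  · rw [smul_set_sdiff₀ (inv_pos.2 hs).ne', hsB]
    refine measure_mono_null (fun x hx => ?_) (ae_iff.1 hae)
    exact fun h => hx.2 (h.1 hx.1)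
  · rw [smul_set_sdiff₀ (inv_pos.2 hs).ne', hsB]
    refine measure_mono_null (fun x hx => ?_) (ae_iff.1 hae)
    exact fun h => hx.2 (h.2 hx.1)
end

section
/- Let φ : (0,∞) → [0,∞) be non-increasing, lower semi-continuous, non-integrable at the origin (∫₀¹ φ = ∞) and integrable at infinity (∫₁^∞ φ < ∞), and let μ be the measure φ(t)dt on ℝ₊ = [0,∞). Set Φ(t) := ∫_t^∞ φ(s)ds for t > 0, with generalized inverse Φ⁻¹(v) := inf{t > 0 : Φ(t) ≤ v}, and let B = [0,b] for some b > 0. Then for every Borel set C ⊆ ℝ₊ with μ(C) < ∞, μ⁻_B(C) ≥ b·φ(Φ⁻¹(μ(C))), with the convention φ(∞) = 0. -/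
open MeasureTheory Set Filter
open scoped Pointwise ENNReal Topology

/-- One-dimensional (outer) Minkowski boundary measure of `A` with respect to `B`:
`μ⁺_B(A) := liminf_{ε → 0⁺} μ((A + εB) \ A) / ε`. -/
noncomputable def bdry1 (μ : Measure ℝ) (B A : Set ℝ) : ℝ≥0∞ :=
  Filter.liminf (fun ε : ℝ => μ ((A + ε • B) \ A) / ENNReal.ofReal ε) (𝓝[>] (0 : ℝ))

/-- Generalized inverse `Φ⁻¹(v) = inf {t > 0 : Φ(t) ≤ v}`, valued in `ℝ≥0∞`
(so an empty set gives `∞`). -/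
noncomputable def genInvE (Φ : ℝ → ℝ) (v : ℝ) : ℝ≥0∞ :=
  ⨅ (t : ℝ) (_ : 0 < t) (_ : Φ t ≤ v), ENNReal.ofReal t

/-- Extension of a function `φ : ℝ → ℝ` to `ℝ≥0∞` arguments, with the convention
`φ(∞) = 0`. -/
noncomputable def phiE (φ : ℝ → ℝ) (s : ℝ≥0∞) : ℝ :=
  if s = ⊤ then 0 else φ s.toReal

/-- If every point `x` of `K ⊆ (h, ∞)` has its backward window `[x - h, x]` inside `C`, then
`C \ K` has Lebesgue measure at least `h` to the left of any point of `K`. -/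
lemma ofReal_le_volume_diff_inter_Ioc {C K : Set ℝ} {h x₀ : ℝ}
    (hK : ∀ x ∈ K, 0 < x → h < x)
    (hwin : ∀ x ∈ K, ∀ y, 0 < y → x - h ≤ y → y ≤ x → y ∈ C)
    (hh : 0 ≤ h) (hx₀ : x₀ ∈ K) (hpos : 0 < x₀) :
    ENNReal.ofReal h ≤ volume ((C \ K) ∩ Ioc 0 x₀) := by
  set E := K ∩ Ioc 0 x₀
  have hEfin : volume E ≠ ⊤ :=
    ((measure_mono inter_subset_right).trans_lt measure_Ioc_lt_top).ne
  have hshift : volume ((fun y => y + h) ⁻¹' E) = volume E := measure_preimage_add_right _ _ _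
  have hdisj : Disjoint ((fun y => y + h) ⁻¹' E) (Ioc (x₀ - h) x₀) := by
    rw [Set.disjoint_left]
    rintro y ⟨-, -, hy⟩ ⟨hy', -⟩
    linarith
  have hsub : (fun y => y + h) ⁻¹' E ∪ Ioc (x₀ - h) x₀ ⊆ C ∩ Ioc 0 x₀ := by
    have hx₀h := hK x₀ hx₀ hpos
    rintro y (⟨hyK, hy0, hyx⟩ | ⟨hy, hyx⟩)
    · have := hK _ hyK hy0
      exact ⟨hwin _ hyK y (by linarith) (by linarith) (by linarith), by linarith, by linarith⟩
    · exact ⟨hwin x₀ hx₀ y (by linarith) hy.le hyx, by linarith, hyx⟩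
  have hcover : C ∩ Ioc 0 x₀ ⊆ E ∪ (C \ K) ∩ Ioc 0 x₀ := by
    rintro y ⟨hyC, hy⟩
    by_cases hyK : y ∈ K
    · exact Or.inl ⟨hyK, hy⟩
    · exact Or.inr ⟨⟨hyC, hyK⟩, hy⟩
  have hle : volume E + ENNReal.ofReal h ≤ volume E + volume ((C \ K) ∩ Ioc 0 x₀) := by
    calc volume E + ENNReal.ofReal h
        = volume ((fun y => y + h) ⁻¹' E ∪ Ioc (x₀ - h) x₀) := by
          rw [measure_union hdisj measurableSet_Ioc, hshift, Real.volume_Ioc]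
          congr 2
          ring
      _ ≤ volume (E ∪ (C \ K) ∩ Ioc 0 x₀) := measure_mono (hsub.trans hcover)
      _ ≤ _ := measure_union_le _ _
  exact (ENNReal.add_le_add_iff_left hEfin).1 hle

/-- The measure `φ(t) dt` on the positive half-line. -/
noncomputable def halfLineMeasure (φ : ℝ → ℝ) : Measure ℝ :=
  volume.withDensity fun t => if 0 < t then ENNReal.ofReal (φ t) else 0

lemma halfLineMeasure_apply {φ : ℝ → ℝ} {s : Set ℝ} (hs : MeasurableSet s) (hs0 : s ⊆ Ioi 0) :
    halfLineMeasure φ s = ∫⁻ t in s, ENNReal.ofReal (φ t) := by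
  rw [halfLineMeasure, withDensity_apply _ hs]
  exact setLIntegral_congr_fun hs fun t ht => if_pos (hs0 ht)

lemma halfLineMeasure_singleton_zero (φ : ℝ → ℝ) : halfLineMeasure φ {0} = 0 :=
  withDensity_absolutelyContinuous _ _ Real.volume_singleton

lemma mul_volume_le_halfLineMeasure {φ : ℝ → ℝ} (hφm : Measurable φ)
    (hφmono : ∀ s t : ℝ, 0 < s → s ≤ t → φ t ≤ φ s) {x : ℝ} {s : Set ℝ} (hs : s ⊆ Ioc 0 x) :
    ENNReal.ofReal (φ x) * volume s ≤ halfLineMeasure φ s := by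
  refine le_trans ?_ (withDensity_apply_le _ s)
  rw [← setLIntegral_const]
  refine setLIntegral_mono
    (Measurable.ite measurableSet_Ioi hφm.ennreal_ofReal measurable_const) fun y hy => ?_
  rw [if_pos (hs hy).1]
  exact ENNReal.ofReal_le_ofReal (hφmono _ _ (hs hy).1 (hs hy).2)

lemma halfLineMeasure_Icc_lt_top {φ : ℝ → ℝ}
    (hφmono : ∀ s t : ℝ, 0 < s → s ≤ t → φ t ≤ φ s) {x : ℝ} (hx : 0 < x) (y : ℝ) :
    halfLineMeasure φ (Icc x y) < ⊤ := by
  rw [halfLineMeasure_apply measurableSet_Icc fun t ht => hx.trans_le ht.1]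
  calc ∫⁻ t in Icc x y, ENNReal.ofReal (φ t)
      ≤ ∫⁻ _ in Icc x y, ENNReal.ofReal (φ x) :=
        setLIntegral_mono measurable_const fun t ht =>
          ENNReal.ofReal_le_ofReal (hφmono _ _ hx ht.1)
    _ < ⊤ := by
        rw [setLIntegral_const]
        exact ENNReal.mul_lt_top ENNReal.ofReal_lt_top measure_Icc_lt_top

lemma halfLineMeasure_Ioi_lt_top {φ : ℝ → ℝ}
    (hφmono : ∀ s t : ℝ, 0 < s → s ≤ t → φ t ≤ φ s)
    (hintinf : ∫⁻ t in Ioi (1 : ℝ), ENNReal.ofReal (φ t) < ⊤) {x : ℝ} (hx : 0 < x) :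
    halfLineMeasure φ (Ioi x) < ⊤ := by
  rw [← halfLineMeasure_apply measurableSet_Ioi (Ioi_subset_Ioi zero_le_one)] at hintinf
  have hsub : Ioi x ⊆ Icc x 1 ∪ Ioi 1 := fun y hy =>
    (le_or_gt y 1).imp (fun h => ⟨le_of_lt hy, h⟩) id
  exact (measure_mono hsub).trans_lt ((measure_union_le _ _).trans_lt
    (ENNReal.add_lt_top.2 ⟨halfLineMeasure_Icc_lt_top hφmono hx 1, hintinf⟩))

lemma halfLineMeasure_Ioo_zero {φ : ℝ → ℝ}
    (hφmono : ∀ s t : ℝ, 0 < s → s ≤ t → φ t ≤ φ s)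
    (hint0 : ∫⁻ t in Ioo (0 : ℝ) 1, ENNReal.ofReal (φ t) = ⊤) {x : ℝ} (hx : 0 < x) :
    halfLineMeasure φ (Ioo 0 x) = ⊤ := by
  rw [← halfLineMeasure_apply measurableSet_Ioo Ioo_subset_Ioi_self] at hint0
  have hsub : Ioo (0 : ℝ) 1 ⊆ Ioo 0 x ∪ Icc x 1 := fun y hy =>
    (lt_or_ge y x).imp (fun h => ⟨hy.1, h⟩) fun h => ⟨h, hy.2.le⟩
  by_contra hne
  refine ((measure_mono hsub).trans_lt ((measure_union_le _ _).trans_lt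
    (ENNReal.add_lt_top.2 ⟨lt_top_iff_ne_top.2 hne,
      halfLineMeasure_Icc_lt_top hφmono hx 1⟩))).ne hint0

lemma integral_Ioi_eq_toReal_halfLineMeasure {φ : ℝ → ℝ} (hφm : Measurable φ)
    (hφ0 : ∀ t : ℝ, 0 < t → 0 ≤ φ t) {t : ℝ} (ht : 0 < t) :
    ∫ s in Ioi t, φ s = (halfLineMeasure φ (Ioi t)).toReal := by
  rw [halfLineMeasure_apply measurableSet_Ioi (Ioi_subset_Ioi ht.le)]
  refine integral_eq_lintegral_of_nonneg_ae ?_ hφm.aestronglyMeasurable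
  exact (ae_restrict_mem measurableSet_Ioi).mono fun s hs => hφ0 s (ht.trans hs)

/-- The mass of `(t, ∞)` is unbounded as `t → 0⁺`. -/
lemma exists_lt_halfLineMeasure_Ioi {φ : ℝ → ℝ}
    (hint0 : ∫⁻ t in Ioo (0 : ℝ) 1, ENNReal.ofReal (φ t) = ⊤) {v : ℝ≥0∞} (hv : v < ⊤) :
    ∃ t : ℝ, 0 < t ∧ v < halfLineMeasure φ (Ioi t) := by
  by_contra! hcon
  rw [← halfLineMeasure_apply measurableSet_Ioo Ioo_subset_Ioi_self] at hint0
  have hsub : Ioo (0 : ℝ) 1 ⊆ ⋃ n : ℕ, Ioi (1 / ((n : ℝ) + 1)) := fun y hy =>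
    mem_iUnion.2 (exists_nat_one_div_lt hy.1)
  have hmono : Monotone fun n : ℕ => Ioi (1 / ((n : ℝ) + 1)) := fun m n hmn =>
    Ioi_subset_Ioi (Nat.one_div_le_one_div hmn)
  have hle := measure_mono (μ := halfLineMeasure φ) hsub
  rw [hint0, hmono.measure_iUnion] at hle
  exact (hle.trans (iSup_le fun n => hcon _ Nat.one_div_pos_of_nat)).not_gt hv

/-- Either the boundary layer `S` has mass at least `h φ(t)`, or `C \ S` is carried by `(t, ∞)`
and `S` accounts for the mass of `C` exceeding that of `(t, ∞)`. -/
lemma layer_mass_dichotomy {φ : ℝ → ℝ} (hφm : Measurable φ)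
    (hφmono : ∀ s t : ℝ, 0 < s → s ≤ t → φ t ≤ φ s)
    (hint0 : ∫⁻ t in Ioo (0 : ℝ) 1, ENNReal.ofReal (φ t) = ⊤)
    {C S : Set ℝ} (hC0 : C ⊆ Ici 0) (hCfin : halfLineMeasure φ C < ⊤) {h t : ℝ} (hh : 0 < h)
    (hwin : ∀ x ∈ C \ S, ∀ y, 0 < y → x - h ≤ y → y ≤ x → y ∈ C) :
    ENNReal.ofReal (φ t) * ENNReal.ofReal h ≤ halfLineMeasure φ S ∨
      halfLineMeasure φ C ≤ halfLineMeasure φ (Ioi t) + halfLineMeasure φ S := by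
  by_cases hex : ∃ x ∈ C \ S, 0 < x ∧ x ≤ t
  · obtain ⟨x, hx, hx0, hxt⟩ := hex
    left
    have hK : ∀ x ∈ C \ S, 0 < x → h < x := by
      intro x hx hx0
      by_contra! hxh
      refine hCfin.not_ge ?_
      rw [← halfLineMeasure_Ioo_zero hφmono hint0 hx0]
      exact measure_mono fun y hy => hwin x hx y hy.1 (by linarith [hy.1]) hy.2.le
    calc ENNReal.ofReal (φ t) * ENNReal.ofReal h
        ≤ ENNReal.ofReal (φ x) * volume ((C \ (C \ S)) ∩ Ioc 0 x) :=
          mul_le_mul' (ENNReal.ofReal_le_ofReal (hφmono _ _ hx0 hxt))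
            (ofReal_le_volume_diff_inter_Ioc hK hwin hh.le hx hx0)
      _ ≤ halfLineMeasure φ ((C \ (C \ S)) ∩ Ioc 0 x) :=
          mul_volume_le_halfLineMeasure hφm hφmono inter_subset_right
      _ ≤ halfLineMeasure φ S := measure_mono fun y hy => by
          by_contra hyS
          exact hy.1.2 ⟨hy.1.1, hyS⟩
  · push Not at hex
    right
    have hsub : C ⊆ {0} ∪ (Ioi t ∪ S) := by
      intro y hy
      by_cases hyS : y ∈ S
      · exact Or.inr (Or.inr hyS)
      · rcases (mem_Ici.1 (hC0 hy)).eq_or_lt with h0 | h0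
        · exact Or.inl h0.symm
        · exact Or.inr (Or.inl (hex y ⟨hy, hyS⟩ h0))
    calc halfLineMeasure φ C ≤ halfLineMeasure φ ({0} ∪ (Ioi t ∪ S)) := measure_mono hsub
      _ ≤ halfLineMeasure φ {0} + halfLineMeasure φ (Ioi t ∪ S) := measure_union_le _ _
      _ ≤ _ := by
          rw [halfLineMeasure_singleton_zero, zero_add]
          exact measure_union_le _ _

lemma mem_of_mem_diff_layer {C : Set ℝ} {b ε : ℝ} (hε : 0 < ε) {x y : ℝ}
    (hx : x ∈ C \ ((Ici 0 \ C + ε • Icc 0 b) \ (Ici 0 \ C))) (hy : 0 < y)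
    (hxy : x - ε * b ≤ y) (hyx : y ≤ x) : y ∈ C := by
  by_contra hyC
  refine hx.2 ⟨?_, fun h => h.2 hx.1⟩
  refine Set.mem_add.2 ⟨y, ⟨hy.le, hyC⟩, x - y, ?_, by ring⟩
  refine Set.mem_smul_set.2 ⟨(x - y) / ε, ⟨by have := sub_nonneg.2 hyx; positivity, ?_⟩, ?_⟩
  · rw [div_le_iff₀ hε]
    linarith
  · rw [smul_eq_mul]
    field_simp

/-- Past a finite generalized inverse, tail masses are smaller than `v`. -/
lemma halfLineMeasure_Ioi_lt_of_genInvE_lt {φ Φ : ℝ → ℝ} (hφm : Measurable φ)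
    (hφ0 : ∀ t : ℝ, 0 < t → 0 ≤ φ t)
    (hφmono : ∀ s t : ℝ, 0 < s → s ≤ t → φ t ≤ φ s)
    (hintinf : ∫⁻ t in Ioi (1 : ℝ), ENNReal.ofReal (φ t) < ⊤)
    (hΦ : ∀ t : ℝ, 0 < t → Φ t = ∫ s in Ioi t, φ s) {v : ℝ≥0∞} (hv : v < ⊤) {t : ℝ}
    (ht : genInvE Φ v.toReal < ENNReal.ofReal t) (hφt : 0 < φ t) :
    halfLineMeasure φ (Ioi t) < v := by
  simp only [genInvE, iInf_lt_iff] at ht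
  obtain ⟨s, hs0, hsv, hst⟩ := ht
  have hst : s < t := (ENNReal.ofReal_lt_ofReal_iff_of_nonneg hs0.le).1 hst
  rw [hΦ s hs0, integral_Ioi_eq_toReal_halfLineMeasure hφm hφ0 hs0,
    ENNReal.toReal_le_toReal (halfLineMeasure_Ioi_lt_top hφmono hintinf hs0).ne hv.ne] at hsv
  have hIoc : 0 < halfLineMeasure φ (Ioc s t) := by
    refine lt_of_lt_of_le ?_ (mul_volume_le_halfLineMeasure hφm hφmono
      (Ioc_subset_Ioc_left hs0.le))
    rw [Real.volume_Ioc]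
    exact ENNReal.mul_pos (by simpa using hφt) (by simpa using hst)
  refine lt_of_lt_of_le ?_ hsv
  rw [← Ioc_union_Ioi_eq_Ioi hst.le, measure_union
    (Set.disjoint_left.2 fun y hy hy' => (hy.2.trans_lt hy').false) measurableSet_Ioi, add_comm]
  exact ENNReal.lt_add_right
    (halfLineMeasure_Ioi_lt_top hφmono hintinf (hs0.trans hst)).ne hIoc.ne'

lemma genInvE_pos {φ Φ : ℝ → ℝ} (hφm : Measurable φ)
    (hφ0 : ∀ t : ℝ, 0 < t → 0 ≤ φ t)
    (hφmono : ∀ s t : ℝ, 0 < s → s ≤ t → φ t ≤ φ s)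
    (hint0 : ∫⁻ t in Ioo (0 : ℝ) 1, ENNReal.ofReal (φ t) = ⊤)
    (hintinf : ∫⁻ t in Ioi (1 : ℝ), ENNReal.ofReal (φ t) < ⊤)
    (hΦ : ∀ t : ℝ, 0 < t → Φ t = ∫ s in Ioi t, φ s) {v : ℝ≥0∞} (hv : v < ⊤) :
    0 < genInvE Φ v.toReal := by
  obtain ⟨t, ht0, htv⟩ := exists_lt_halfLineMeasure_Ioi hint0 hv
  refine lt_of_lt_of_le (ENNReal.ofReal_pos.2 ht0) ?_
  refine le_iInf fun s => le_iInf fun hs0 => le_iInf fun hsv => ENNReal.ofReal_le_ofReal ?_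
  rw [hΦ s hs0, integral_Ioi_eq_toReal_halfLineMeasure hφm hφ0 hs0,
    ENNReal.toReal_le_toReal (halfLineMeasure_Ioi_lt_top hφmono hintinf hs0).ne hv.ne] at hsv
  by_contra! hst
  exact (htv.trans_le ((measure_mono (Ioi_subset_Ioi hst.le)).trans hsv)).false

lemma exists_gt_lt_of_lowerSemicontinuousOn {φ : ℝ → ℝ}
    (hφlsc : LowerSemicontinuousOn φ (Ioi 0)) {t c : ℝ} (ht : 0 < t) (hc : c < φ t) :
    ∃ t', t < t' ∧ c < φ t' := by
  have h := hφlsc t ht c hc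
  rw [isOpen_Ioi.nhdsWithin_eq ht] at h
  obtain ⟨t', h1, h2⟩ := ((h.filter_mono nhdsWithin_le_nhds).and
    (self_mem_nhdsWithin : Ioi t ∈ 𝓝[>] t)).exists
  exact ⟨t', h2, h1⟩

/-- one-dimensional isoperimetric inequality: for `μ = φ(t)dt` on `ℝ₊` with
`φ` non-increasing, lower semi-continuous, non-integrable at `0` and integrable at `∞`,
and `B = [0,b]`, we have `μ⁻_B(C) ≥ b ⬝ φ(Φ⁻¹(μ(C)))` for every Borel `C ⊆ ℝ₊` of finite
measure. -/
theorem stmt15 (φ : ℝ → ℝ) (hφm : Measurable φ) (hφ0 : ∀ t : ℝ, 0 < t → 0 ≤ φ t)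
    (hφmono : ∀ s t : ℝ, 0 < s → s ≤ t → φ t ≤ φ s)
    (hφlsc : LowerSemicontinuousOn φ (Set.Ioi 0))
    (hint0 : ∫⁻ t in Set.Ioo (0 : ℝ) 1, ENNReal.ofReal (φ t) = ⊤)
    (hintinf : ∫⁻ t in Set.Ioi (1 : ℝ), ENNReal.ofReal (φ t) < ⊤)
    (μ : Measure ℝ)
    (hμ : μ = volume.withDensity fun t => if 0 < t then ENNReal.ofReal (φ t) else 0)
    (Φ : ℝ → ℝ) (hΦ : ∀ t : ℝ, 0 < t → Φ t = ∫ s in Set.Ioi t, φ s)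
    (b : ℝ) (hb : 0 < b) :
    ∀ C : Set ℝ, MeasurableSet C → C ⊆ Set.Ici 0 → μ C < ⊤ →
      ENNReal.ofReal (b * phiE φ (genInvE Φ (μ C).toReal)) ≤
        bdry1 μ (Set.Icc 0 b) (Set.Ici 0 \ C) := by
  intro C _ hC0 hCfin
  change μ = halfLineMeasure φ at hμ
  subst hμ
  set v := halfLineMeasure φ C
  have hTpos : 0 < genInvE Φ v.toReal :=
    genInvE_pos hφm hφ0 hφmono hint0 hintinf hΦ hCfin
  rw [phiE]
  split_ifs with hT
  · simp
  set t := (genInvE Φ v.toReal).toReal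
  have ht : 0 < t := ENNReal.toReal_pos hTpos.ne' hT
  refine le_of_forall_lt fun d hd => ?_
  obtain ⟨d', hdd', hd'⟩ := exists_between hd
  refine hdd'.trans_le ?_
  have hd'top : d' ≠ ⊤ := hd'.ne_top
  set c := d'.toReal / b with hc_def
  have hd'eq : d' = ENNReal.ofReal (c * b) := by
    rw [hc_def, div_mul_cancel₀ _ hb.ne', ENNReal.ofReal_toReal hd'top]
  have hc0 : 0 ≤ c := div_nonneg ENNReal.toReal_nonneg hb.le
  have hct : c < φ t := by
    rw [hd'eq, ENNReal.ofReal_lt_ofReal_iff_of_nonneg (mul_nonneg hc0 hb.le), mul_comm] at hd'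
    exact lt_of_mul_lt_mul_left hd' hb.le
  obtain ⟨t', htt', hct'⟩ := exists_gt_lt_of_lowerSemicontinuousOn hφlsc ht hct
  have hlt : halfLineMeasure φ (Ioi t') < v :=
    halfLineMeasure_Ioi_lt_of_genInvE_lt hφm hφ0 hφmono hintinf hΦ hCfin
      ((ENNReal.lt_ofReal_iff_toReal_lt hT).2 htt') (hc0.trans_lt hct')
  have hsmall : ∀ᶠ ε : ℝ in 𝓝[>] 0,
      d' * ENNReal.ofReal ε < v - halfLineMeasure φ (Ioi t') := by
    have hlim : Tendsto (fun ε : ℝ => d' * ENNReal.ofReal ε) (𝓝[>] 0) (𝓝 0) := by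
      have := ENNReal.Tendsto.const_mul (a := d')
        (ENNReal.tendsto_ofReal (tendsto_id (α := ℝ) (x := 𝓝 0))) (Or.inr hd'top)
      simp only [id, ENNReal.ofReal_zero, mul_zero] at this
      exact this.mono_left nhdsWithin_le_nhds
    exact hlim.eventually_lt_const (tsub_pos_of_lt hlt)
  refine le_liminf_of_le (by isBoundedDefault) ?_
  filter_upwards [hsmall, self_mem_nhdsWithin] with ε hεsmall hε
  have hε : 0 < ε := hε
  rw [ENNReal.le_div_iff_mul_le (Or.inl (ENNReal.ofReal_pos.2 hε).ne')
    (Or.inl ENNReal.ofReal_ne_top)]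
  rcases layer_mass_dichotomy (t := t') hφm hφmono hint0 hC0 hCfin (mul_pos hε hb)
    (fun x hx y => mem_of_mem_diff_layer hε hx) with hS | hS
  · refine le_trans ?_ hS
    rw [hd'eq, ← ENNReal.ofReal_mul (mul_nonneg hc0 hb.le), ← ENNReal.ofReal_mul
      (hc0.trans hct'.le)]
    refine ENNReal.ofReal_le_ofReal ?_
    rw [mul_assoc, mul_comm b ε]
    exact mul_le_mul_of_nonneg_right hct'.le (mul_pos hε hb).le
  · exact hεsmall.le.trans (tsub_le_iff_left.2 hS)
end

section
/- Let n ≥ 1, p ∈ (−1/n, 0), and let q satisfy 1/q = 1/p + n (so q < 0). Let w : ℝⁿ∖{0} → [0,∞) be a locally-integrable p-homogeneous Borel density and let μ be the measure with density w with respect to Lebesgue measure. Let ‖·‖ be a norm on ℝⁿ, and set α := 1/(1−q), C₁ := −(1/q)·μ({x : ‖x‖ ≥ 1})^q, and C₂ := C₁^{−α}. Then for every essentially bounded locally Lipschitz function f : ℝⁿ → ℝ with f(0) = 0, ‖f‖_{L¹(μ)} ≤ C₂·(∫ ‖∇f‖*(x) dμ(x))^α·‖f‖_{L^∞(μ)}^{1−α},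 where ‖∇f‖*(x) := limsup_{y→x} |f(y)−f(x)|/‖y−x‖. -/
open MeasureTheory Set Filter
open scoped Pointwise ENNReal Topology

section Gauge

variable {E : Type*} [NormedAddCommGroup E] [NormedSpace ℝ E] {N : E → ℝ}

lemma gauge_continuous [FiniteDimensional ℝ E] (hNadd : ∀ x y, N (x + y) ≤ N x + N y)
    (hNhom : ∀ c : ℝ, 0 ≤ c → ∀ x, N (c • x) = c * N x) : Continuous N := by
  refine (ConvexOn.locallyLipschitz ⟨convex_univ, ?_⟩).continuous
  intro x _ y _ a b ha hb _
  simpa [hNhom a ha, hNhom b hb] using hNadd (a • x) (b • y)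

lemma exists_mul_norm_le_gauge [FiniteDimensional ℝ E] (hNc : Continuous N)
    (hNpos : ∀ x, x ≠ 0 → 0 < N x)
    (hNhom : ∀ c : ℝ, 0 ≤ c → ∀ x, N (c • x) = c * N x) :
    ∃ k > 0, ∀ x, k * ‖x‖ ≤ N x := by
  have hN_zero : N 0 = 0 := by simpa using hNhom 0 le_rfl 0
  rcases subsingleton_or_nontrivial E with hE | hE
  · refine ⟨1, one_pos, fun x => ?_⟩
    simp [Subsingleton.elim x 0, hN_zero]
  have : ProperSpace E := FiniteDimensional.proper ℝ E
  obtain ⟨z, hz, hmin⟩ := (isCompact_sphere (0 : E) 1).exists_isMinOn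
    (NormedSpace.sphere_nonempty.2 zero_le_one) hNc.continuousOn
  have hz1 : ‖z‖ = 1 := by simpa using hz
  refine ⟨N z, hNpos z (by rintro rfl; simp at hz1), fun x => ?_⟩
  rcases eq_or_ne x 0 with rfl | hx
  · simp [hN_zero]
  have hnx : 0 < ‖x‖ := norm_pos_iff.2 hx
  have h : N z ≤ N (‖x‖⁻¹ • x) := hmin (by simp [norm_smul, hnx.ne'])
  rw [hNhom _ (by positivity), inv_mul_eq_div, le_div_iff₀ hnx] at h
  exact h

/-- The radial derivative of a locally Lipschitz function is controlled by its metric slope. -/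
lemma abs_deriv_radial_le_limsup_slope [FiniteDimensional ℝ E] (hNc : Continuous N)
    (hN0 : ∀ x, 0 ≤ N x) (hNpos : ∀ x, x ≠ 0 → 0 < N x)
    (hNhom : ∀ c : ℝ, 0 ≤ c → ∀ x, N (c • x) = c * N x)
    {f : E → ℝ} (hf : LocallyLipschitz f) {x : E} (hx : x ≠ 0) :
    |deriv (fun t : ℝ => f (t • x)) 1| / N x ≤
      limsup (fun y => |f y - f x| / N (y - x)) (𝓝[≠] x) := by
  have hNx := hNpos x hx
  obtain ⟨k, hk, hkN⟩ := exists_mul_norm_le_gauge hNc hNpos hNhom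
  have hbdd : IsBoundedUnder (· ≤ ·) (𝓝[≠] x) (fun y => |f y - f x| / N (y - x)) := by
    obtain ⟨K, t, ht, hK⟩ := hf x
    refine isBoundedUnder_of_eventually_le (a := K / k) ?_
    filter_upwards [mem_nhdsWithin_of_mem_nhds ht, self_mem_nhdsWithin] with y hy hyx
    have hyx' : y - x ≠ 0 := sub_ne_zero.2 hyx
    rw [div_le_div_iff₀ (hNpos _ hyx') hk]
    have h := hK.dist_le_mul y hy x (mem_of_mem_nhds ht)
    rw [Real.dist_eq, dist_eq_norm] at h
    calc |f y - f x| * k ≤ K * ‖y - x‖ * k := by gcongr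
      _ = K * (k * ‖y - x‖) := by ring
      _ ≤ K * N (y - x) := by gcongr; exact hkN _
  have hmap : Tendsto (fun t : ℝ => t • x) (𝓝[>] 1) (𝓝[≠] x) := by
    refine tendsto_nhdsWithin_iff.2 ⟨?_, ?_⟩
    · have : Continuous fun t : ℝ => t • x := by fun_prop
      simpa using (this.tendsto 1).mono_left nhdsWithin_le_nhds
    · filter_upwards [self_mem_nhdsWithin] with t ht h
      have h' : (t - 1) • x = 0 := by rw [sub_smul, one_smul, sub_eq_zero]; exact h
      rcases smul_eq_zero.1 h' with h1 | h1
      · exact (sub_pos.2 (show (1 : ℝ) < t from ht)).ne' h1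
      · exact hx h1
  have hlim : |deriv (fun t : ℝ => f (t • x)) 1| / N x ≤
      limsup ((fun y => |f y - f x| / N (y - x)) ∘ fun t : ℝ => t • x) (𝓝[>] 1) := by
    by_cases hd : DifferentiableAt ℝ (fun t : ℝ => f (t • x)) 1
    · refine (Tendsto.limsup_eq ?_).ge
      have h1 : Tendsto (slope (fun t : ℝ => f (t • x)) 1) (𝓝[>] 1)
          (𝓝 (deriv (fun t : ℝ => f (t • x)) 1)) :=
        (hasDerivAt_iff_tendsto_slope.1 hd.hasDerivAt).mono_left
          (nhdsWithin_mono _ fun t ht => ne_of_gt ht)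
      refine (h1.abs.div_const (N x)).congr' ?_
      filter_upwards [self_mem_nhdsWithin] with t ht
      have ht' : 0 < t - 1 := sub_pos.2 ht
      have h2 : t • x - x = (t - 1) • x := by rw [sub_smul, one_smul]
      simp only [Function.comp, h2, hNhom _ ht'.le, slope_def_field, one_smul, abs_div,
        abs_of_pos ht', div_div]
    · rw [deriv_zero_of_not_differentiableAt hd, abs_zero, zero_div]
      refine le_limsup_of_frequently_le (Eventually.frequently (Eventually.of_forall fun t => ?_))
        (hmap.isBoundedUnder_comp hbdd)
      exact div_nonneg (abs_nonneg _) (hN0 _)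
  refine hlim.trans ?_
  refine Tendsto.limsup_comp_le_limsup hmap ?_ hbdd
  exact (isBoundedUnder_of (f := 𝓝[>] (1 : ℝ)) (r := (· ≥ ·))
    ⟨0, fun t => div_nonneg (abs_nonneg _) (hN0 _)⟩).isCoboundedUnder_le

end Gauge

section Radial

variable {E : Type*} [NormedAddCommGroup E] [NormedSpace ℝ E]

lemma enorm_sub_le_lintegral_deriv_radial {f : E → ℝ} (hf : LocallyLipschitz f) (x : E) :
    ‖f x - f 0‖ₑ ≤ ∫⁻ τ in Ioc (0 : ℝ) 1, ‖deriv (fun t : ℝ => f (t • x)) τ‖ₑ := by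
  have hray : LocallyLipschitz fun t : ℝ => t • x :=
    (ContinuousLinearMap.toSpanSingleton ℝ x).lipschitz.locallyLipschitz
  obtain ⟨K, hK⟩ := (hf.comp hray).locallyLipschitzOn.exists_lipschitzOnWith_of_compact
    (isCompact_uIcc (a := (0 : ℝ)) (b := 1))
  have h := hK.absolutelyContinuousOnInterval.integral_deriv_eq_sub
  simp only [Function.comp_def, one_smul, zero_smul] at h
  rw [← h, intervalIntegral.integral_of_le zero_le_one]
  exact enorm_integral_le_lintegral_enorm _

lemma deriv_radial_eq (f : E → ℝ) (x : E) {τ : ℝ} (hτ : τ ≠ 0) :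
    deriv (fun t : ℝ => f (t • x)) τ = τ⁻¹ * deriv (fun t : ℝ => f (t • τ • x)) 1 := by
  have h := deriv_comp_mul_left τ (fun t : ℝ => f (t • x)) 1
  simp only [mul_one, smul_eq_mul] at h
  simp only [smul_smul, mul_comm _ τ]
  rw [h, inv_mul_cancel_left₀ hτ]

end Radial

section Homogeneous

variable {E : Type*} [NormedAddCommGroup E] [NormedSpace ℝ E] [MeasurableSpace E] [BorelSpace E]

/-- A measure scaling like `|x| ^ (-s - dim E) dx` under positive dilations. -/
def IsDilationHomogeneous (μ : Measure E) (s : ℝ) : Prop :=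
  ∀ c : ℝ, 0 < c → ∀ h : E → ℝ≥0∞, Measurable h →
    ∫⁻ x, h (c • x) ∂μ = ENNReal.ofReal (c ^ s) * ∫⁻ x, h x ∂μ

namespace IsDilationHomogeneous

variable {μ : Measure E} {s : ℝ} {N : E → ℝ}

lemma measure_preimage_smul (hμ : IsDilationHomogeneous μ s) {c : ℝ} (hc : 0 < c) {A : Set E}
    (hA : MeasurableSet A) :
    μ ((c • ·) ⁻¹' A) = ENNReal.ofReal (c ^ s) * μ A := by
  have h := hμ c hc (A.indicator 1) (measurable_one.indicator hA)
  rw [lintegral_indicator_one hA] at h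
  rw [← h, ← lintegral_indicator_one (measurable_const_smul c hA)]
  rfl

lemma measure_gauge_ge (hμ : IsDilationHomogeneous μ s) (hNm : Measurable N)
    (hNhom : ∀ c : ℝ, 0 ≤ c → ∀ x, N (c • x) = c * N x) {r : ℝ} (hr : 0 < r) :
    μ {x | r ≤ N x} = ENNReal.ofReal (r ^ (-s)) * μ {x | 1 ≤ N x} := by
  have h := hμ.measure_preimage_smul (inv_pos.2 hr) (measurableSet_le measurable_const hNm :
    MeasurableSet {x | 1 ≤ N x})
  rw [Real.inv_rpow hr.le, ← Real.rpow_neg hr.le] at h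
  rw [← h]
  congr 1
  ext x
  simp only [mem_ofPred_eq, mem_preimage, hNhom _ (inv_pos.2 hr).le, inv_mul_eq_div,
    le_div_iff₀ hr, one_mul]

lemma lintegral_lintegral_smul [SecondCountableTopology E] [SFinite μ]
    (hμ : IsDilationHomogeneous μ s) (hs : 0 < s) {h : E → ℝ≥0∞} (hh : Measurable h) :
    ∫⁻ x, (∫⁻ τ in Ioc (0 : ℝ) 1, h (τ • x)) ∂μ =
      ENNReal.ofReal (1 / (s + 1)) * ∫⁻ x, h x ∂μ := by
  rw [lintegral_lintegral_swap (by fun_prop)]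
  rw [setLIntegral_congr_fun (g := fun τ : ℝ => ENNReal.ofReal (τ ^ s) * ∫⁻ x, h x ∂μ)
    measurableSet_Ioc (fun τ hτ => hμ τ hτ.1 h hh)]
  rw [lintegral_mul_const _ (by fun_prop)]
  congr 1
  have hint : IntervalIntegrable (fun τ : ℝ => τ ^ s) volume 0 1 :=
    intervalIntegral.intervalIntegrable_rpow' (by linarith)
  rw [← ofReal_integral_eq_lintegral_ofReal, ← intervalIntegral.integral_of_le zero_le_one,
    integral_rpow (Or.inl (by linarith))]
  · simp [Real.zero_rpow (by linarith : s + 1 ≠ 0)]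
  · exact (intervalIntegrable_iff_integrableOn_Ioc_of_le zero_le_one).1 hint
  · filter_upwards [ae_restrict_mem measurableSet_Ioc] with τ hτ
    exact Real.rpow_nonneg hτ.1.le _

/-- The mass of the complement of a gauge ball is finite as soon as the mass of an annulus is. -/
lemma measure_gauge_ge_one_lt_top (hμ : IsDilationHomogeneous μ s) (hs : 0 < s)
    (hNm : Measurable N) (hNhom : ∀ c : ℝ, 0 ≤ c → ∀ x, N (c • x) = c * N x)
    (hA : μ {x | N x ∈ Icc 1 2} < ⊤) : μ {x | 1 ≤ N x} < ⊤ := by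
  set A : Set E := {x | N x ∈ Icc 1 2}
  have hAm : MeasurableSet A := hNm measurableSet_Icc
  have hcover : {x | 1 ≤ N x} ⊆ ⋃ k : ℕ, ((((2 : ℝ)⁻¹ ^ k) • ·) ⁻¹' A : Set E) := by
    intro x hx
    obtain ⟨k, hk1, hk2⟩ := exists_nat_pow_near (show 1 ≤ N x from hx) (one_lt_two)
    refine mem_iUnion.2 ⟨k, ?_⟩
    have h2 : (0 : ℝ) < 2 ^ k := by positivity
    rw [inv_pow]
    simp only [A, mem_preimage, mem_ofPred_eq, hNhom _ (inv_pos.2 h2).le, inv_mul_eq_div, mem_Icc,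
      le_div_iff₀ h2, div_le_iff₀ h2]
    rw [pow_succ] at hk2
    constructor <;> linarith
  refine (measure_mono hcover).trans_lt ((measure_iUnion_le _).trans_lt ?_)
  have hterm : ∀ k : ℕ, μ ((((2 : ℝ)⁻¹ ^ k) • ·) ⁻¹' A) =
      ENNReal.ofReal ((2 : ℝ)⁻¹ ^ s) ^ k * μ A := fun k => by
    rw [hμ.measure_preimage_smul (by positivity) hAm, ← ENNReal.ofReal_pow (by positivity),
      ← Real.rpow_natCast, ← Real.rpow_natCast, ← Real.rpow_mul (by norm_num),
      ← Real.rpow_mul (by norm_num), mul_comm (k : ℝ)]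
  simp only [hterm]
  rw [ENNReal.tsum_mul_right, ENNReal.tsum_geometric]
  refine ENNReal.mul_lt_top (ENNReal.inv_lt_top.2 (tsub_pos_of_lt ?_)) hA
  rw [ENNReal.ofReal_lt_one]
  exact Real.rpow_lt_one (by norm_num) (by norm_num) hs

/-- A Hardy inequality, coming from integration along rays. -/
lemma lintegral_enorm_div_gauge_le [FiniteDimensional ℝ E] [SFinite μ]
    (hμ : IsDilationHomogeneous μ s) (hs : 0 < s) (hμ0 : μ {0} = 0) (hNc : Continuous N)
    (hN0 : ∀ x, 0 ≤ N x) (hNpos : ∀ x, x ≠ 0 → 0 < N x)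
    (hNhom : ∀ c : ℝ, 0 ≤ c → ∀ x, N (c • x) = c * N x)
    {f : E → ℝ} (hf : LocallyLipschitz f) (hf0 : f 0 = 0) :
    ∫⁻ x, ENNReal.ofReal (|f x| / N x) ∂μ ≤ ENNReal.ofReal (1 / (s + 1)) *
      ∫⁻ x, ENNReal.ofReal (limsup (fun y => |f y - f x| / N (y - x)) (𝓝[≠] x)) ∂μ := by
  have : SecondCountableTopology E := by
    have := FiniteDimensional.proper ℝ E
    infer_instance
  have hfc := hf.continuous
  have hD : Measurable fun x : E => deriv (fun t : ℝ => f (t • x)) 1 := by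
    have h := measurable_deriv_with_param (f := fun (x : E) (t : ℝ) => f (t • x))
      (by simp only [Function.uncurry_def]; fun_prop)
    exact h.comp (measurable_id.prodMk measurable_const)
  have hNm : Measurable N := hNc.measurable
  set h : E → ℝ≥0∞ := fun x => ENNReal.ofReal (|deriv (fun t : ℝ => f (t • x)) 1| / N x)
  have hh : Measurable h := (hD.abs.div hNm).ennreal_ofReal
  have hae : ∀ᵐ x ∂μ, x ≠ 0 := by rw [ae_iff]; simpa using hμ0
  calc ∫⁻ x, ENNReal.ofReal (|f x| / N x) ∂μ
      ≤ ∫⁻ x, (∫⁻ τ in Ioc (0 : ℝ) 1, h (τ • x)) ∂μ := by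
        refine lintegral_mono_ae ?_
        filter_upwards [hae] with x hx
        have hNx := hNpos x hx
        have h1 := enorm_sub_le_lintegral_deriv_radial hf x
        rw [hf0, sub_zero] at h1
        rw [ENNReal.ofReal_div_of_pos hNx, ← Real.enorm_eq_ofReal_abs]
        refine ENNReal.div_le_of_le_mul (h1.trans ?_)
        rw [← lintegral_mul_const' _ _ ENNReal.ofReal_ne_top]
        refine setLIntegral_mono' measurableSet_Ioc fun τ hτ => ?_
        simp only [h]
        rw [← ENNReal.ofReal_mul (div_nonneg (abs_nonneg _) (hN0 _)), Real.enorm_eq_ofReal_abs,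
          hNhom τ hτ.1.le, deriv_radial_eq f x hτ.1.ne', abs_mul, abs_of_pos (inv_pos.2 hτ.1)]
        refine ENNReal.ofReal_le_ofReal (le_of_eq ?_)
        have := hτ.1.ne'
        field_simp
    _ = ENNReal.ofReal (1 / (s + 1)) * ∫⁻ x, h x ∂μ := hμ.lintegral_lintegral_smul hs hh
    _ ≤ _ := by
        refine mul_le_mul_right ?_ _
        refine lintegral_mono_ae ?_
        filter_upwards [hae] with x hx
        exact ENNReal.ofReal_le_ofReal
          (abs_deriv_radial_le_limsup_slope hNc hN0 hNpos hNhom hf hx)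

lemma lintegral_one_sub_div_gauge_le [SecondCountableTopology E] [SFinite μ]
    (hμ : IsDilationHomogeneous μ s) (hs : 0 < s) (hNm : Measurable N)
    (hNhom : ∀ c : ℝ, 0 ≤ c → ∀ x, N (c • x) = c * N x) {R : ℝ} (hR : 0 < R) :
    ∫⁻ x, ENNReal.ofReal (1 - R / N x) * {x | R ≤ N x}.indicator 1 x ∂μ ≤
      ENNReal.ofReal (1 / (s + 1)) * (ENNReal.ofReal (R ^ (-s)) * μ {x | 1 ≤ N x}) := by
  have hA : MeasurableSet {x | R ≤ N x} := measurableSet_le measurable_const hNm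
  rw [← hμ.measure_gauge_ge hNm hNhom hR, ← lintegral_indicator_one hA,
    ← hμ.lintegral_lintegral_smul hs (measurable_one.indicator hA)]
  refine lintegral_mono fun x => ?_
  by_cases hx : R ≤ N x
  · have hNx := hR.trans_le hx
    have hsub : Ioc (R / N x) 1 ⊆ Ioc (0 : ℝ) 1 := Ioc_subset_Ioc_left (by positivity)
    calc ENNReal.ofReal (1 - R / N x) * {x | R ≤ N x}.indicator 1 x
        = ∫⁻ τ in Ioc (R / N x) 1, 1 := by simp [hx]
      _ ≤ ∫⁻ τ in Ioc (R / N x) 1, {x | R ≤ N x}.indicator 1 (τ • x) := by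
          refine setLIntegral_mono' measurableSet_Ioc fun τ hτ => ?_
          have h1 : R ≤ N (τ • x) := by
            rw [hNhom _ ((by positivity : 0 ≤ R / N x).trans hτ.1.le)]
            exact ((div_lt_iff₀ hNx).1 hτ.1).le
          simp [h1]
      _ ≤ _ := lintegral_mono_set hsub
  · simp [hx]

/-- The Nash inequality in linear form, with a free scale `R`. -/
lemma lintegral_abs_le [FiniteDimensional ℝ E] [SFinite μ]
    (hμ : IsDilationHomogeneous μ s) (hs : 0 < s) (hμ0 : μ {0} = 0) (hNc : Continuous N)
    (hN0 : ∀ x, 0 ≤ N x) (hNpos : ∀ x, x ≠ 0 → 0 < N x)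
    (hNhom : ∀ c : ℝ, 0 ≤ c → ∀ x, N (c • x) = c * N x)
    {f : E → ℝ} (hf : LocallyLipschitz f) (hf0 : f 0 = 0) {R : ℝ} (hR : 0 < R) :
    ∫⁻ x, ENNReal.ofReal |f x| ∂μ ≤ ENNReal.ofReal (1 / (s + 1)) *
      (ENNReal.ofReal R *
        ∫⁻ x, ENNReal.ofReal (limsup (fun y => |f y - f x| / N (y - x)) (𝓝[≠] x)) ∂μ +
      eLpNorm f ⊤ μ * (ENNReal.ofReal (R ^ (-s)) * μ {x | 1 ≤ N x})) := by
  have : SecondCountableTopology E := by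
    have := FiniteDimensional.proper ℝ E
    infer_instance
  have hNm : Measurable N := hNc.measurable
  have hfm : Measurable f := hf.continuous.measurable
  have hA : MeasurableSet {x | R ≤ N x} := measurableSet_le measurable_const hNm
  have hae : ∀ᵐ x ∂μ, x ≠ 0 := by rw [ae_iff]; simpa using hμ0
  calc ∫⁻ x, ENNReal.ofReal |f x| ∂μ
      ≤ ∫⁻ x, (ENNReal.ofReal R * ENNReal.ofReal (|f x| / N x) +
          eLpNorm f ⊤ μ * (ENNReal.ofReal (1 - R / N x) * {x | R ≤ N x}.indicator 1 x)) ∂μ := by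
        refine lintegral_mono_ae ?_
        filter_upwards [hae, enorm_ae_le_eLpNormEssSup f μ] with x hx hfx
        have hNx := hNpos x hx
        rw [← ENNReal.ofReal_mul hR.le]
        by_cases hRx : R ≤ N x
        · have h1 : 0 ≤ 1 - R / N x := sub_nonneg.2 ((div_le_one hNx).2 hRx)
          have h2 : |f x| = R * (|f x| / N x) + |f x| * (1 - R / N x) := by ring
          calc ENNReal.ofReal |f x|
              = ENNReal.ofReal (R * (|f x| / N x)) + ‖f x‖ₑ * ENNReal.ofReal (1 - R / N x) := by
                rw [Real.enorm_eq_ofReal_abs, ← ENNReal.ofReal_mul (abs_nonneg _),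
                  ← ENNReal.ofReal_add (by positivity) (mul_nonneg (abs_nonneg _) h1), ← h2]
            _ ≤ _ := by
                simp only [eLpNorm_exponent_top, indicator, mem_ofPred_eq, hRx, if_true,
                  Pi.one_apply, mul_one]
                gcongr
        · refine le_add_right (ENNReal.ofReal_le_ofReal ?_)
          rw [mul_div_assoc', le_div_iff₀ hNx, mul_comm R]
          gcongr
          exact (not_le.1 hRx).le
    _ = ENNReal.ofReal R * ∫⁻ x, ENNReal.ofReal (|f x| / N x) ∂μ + eLpNorm f ⊤ μ *
          ∫⁻ x, ENNReal.ofReal (1 - R / N x) * {x | R ≤ N x}.indicator 1 x ∂μ := by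
        have hm1 : Measurable fun x => ENNReal.ofReal (|f x| / N x) := by fun_prop
        have hm2 : Measurable fun x =>
            ENNReal.ofReal (1 - R / N x) * {x | R ≤ N x}.indicator 1 x :=
          Measurable.mul (by fun_prop) (measurable_one.indicator hA)
        rw [lintegral_add_left (hm1.const_mul _), lintegral_const_mul _ hm1,
          lintegral_const_mul _ hm2]
    _ ≤ ENNReal.ofReal R * (ENNReal.ofReal (1 / (s + 1)) *
          ∫⁻ x, ENNReal.ofReal (limsup (fun y => |f y - f x| / N (y - x)) (𝓝[≠] x)) ∂μ) +
        eLpNorm f ⊤ μ * (ENNReal.ofReal (1 / (s + 1)) *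
          (ENNReal.ofReal (R ^ (-s)) * μ {x | 1 ≤ N x})) := by
        gcongr
        · exact hμ.lintegral_enorm_div_gauge_le hs hμ0 hNc hN0 hNpos hNhom hf hf0
        · exact hμ.lintegral_one_sub_div_gauge_le hs hNm hNhom hR
    _ = _ := by ring

end IsDilationHomogeneous

end Homogeneous

section Density

variable {E : Type*} [NormedAddCommGroup E] [NormedSpace ℝ E] {w : E → ℝ} {p : ℝ}

lemma density_smul_eq (hp : p < 0) (hw0 : ∀ x, 0 ≤ w x)
    (hwhom : ∀ c : ℝ, 0 < c → ∀ x : E, x ≠ 0 → w (c • x) ^ p = c * w x ^ p)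
    {c : ℝ} (hc : 0 < c) {x : E} (hx : x ≠ 0) : w (c • x) = c ^ (1 / p) * w x := by
  have h := congrArg (fun y : ℝ => y ^ (1 / p)) (hwhom c hc x hx)
  rwa [Real.mul_rpow hc.le (Real.rpow_nonneg (hw0 _) _), ← Real.rpow_mul (hw0 _),
    ← Real.rpow_mul (hw0 _), mul_one_div_cancel hp.ne, Real.rpow_one, Real.rpow_one] at h

lemma isDilationHomogeneous_withDensity [MeasurableSpace E] [BorelSpace E]
    [FiniteDimensional ℝ E] [Nontrivial E]
    (ν : Measure E) [ν.IsAddHaarMeasure] (hp : p < 0) (hwm : Measurable w) (hw0 : ∀ x, 0 ≤ w x)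
    (hwhom : ∀ c : ℝ, 0 < c → ∀ x : E, x ≠ 0 → w (c • x) ^ p = c * w x ^ p) :
    IsDilationHomogeneous (ν.withDensity fun x => ENNReal.ofReal (w x))
      (-(1 / p) - Module.finrank ℝ E) := by
  intro c hc h hh
  have hsm : Measurable fun x : E => c • x := measurable_const_smul c
  have hW : Measurable fun x => ENNReal.ofReal (w x) := hwm.ennreal_ofReal
  have hae : ∀ᵐ x ∂ν, x ≠ 0 := by rw [ae_iff]; simp
  set H : E → ℝ≥0∞ := fun x => ENNReal.ofReal (w x) * h x
  have hH : Measurable H := hW.mul hh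
  rw [lintegral_withDensity_eq_lintegral_mul _ hW (g := fun x => h (c • x)) (hh.comp hsm),
    lintegral_withDensity_eq_lintegral_mul _ hW hh]
  calc ∫⁻ x, ENNReal.ofReal (w x) * h (c • x) ∂ν
      = ∫⁻ x, ENNReal.ofReal (c ^ (-(1 / p))) * H (c • x) ∂ν := by
        refine lintegral_congr_ae ?_
        filter_upwards [hae] with x hx
        simp only [H]
        rw [density_smul_eq hp hw0 hwhom hc hx, ← mul_assoc,
          ← ENNReal.ofReal_mul (by positivity), ← mul_assoc, ← Real.rpow_add hc,
          neg_add_cancel, Real.rpow_zero, one_mul]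
    _ = ENNReal.ofReal (c ^ (-(1 / p))) * ∫⁻ x, H x ∂(ν.map (c • ·)) := by
        rw [lintegral_map hH hsm]
        exact lintegral_const_mul _ (hH.comp hsm)
    _ = ENNReal.ofReal (c ^ (-(1 / p) - Module.finrank ℝ E)) * ∫⁻ x, H x ∂ν := by
        rw [Measure.map_addHaar_smul ν hc.ne', lintegral_smul_measure, smul_eq_mul, ← mul_assoc,
          ← ENNReal.ofReal_mul (by positivity), abs_of_pos (by positivity), Real.rpow_sub hc,
          Real.rpow_natCast, ← div_eq_mul_inv]

end Density

/-- The optimal choice of scale in the linear form of the Nash inequality. -/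
lemma le_of_forall_scale {s : ℝ} (hs : 0 < s) {X G F M : ℝ≥0∞} (hF0 : F ≠ 0) (hF : F ≠ ⊤)
    (hM0 : M ≠ 0) (hM : M ≠ ⊤)
    (h : ∀ R : ℝ, 0 < R → X ≤ ENNReal.ofReal (1 / (s + 1)) *
      (ENNReal.ofReal R * G + F * (ENNReal.ofReal (R ^ (-s)) * M))) :
    X ≤ ENNReal.ofReal ((s * M.toReal ^ (-(1 / s))) ^ (-(s / (s + 1)))) * G ^ (s / (s + 1)) *
      F ^ (1 - s / (s + 1)) := by
  have hs1 : 0 < s + 1 := by linarith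
  have hα : 0 < s / (s + 1) := by positivity
  have hα' : 0 < 1 - s / (s + 1) := by
    rw [sub_pos, div_lt_one hs1]; linarith
  have hm : 0 < M.toReal := ENNReal.toReal_pos hM0 hM
  have hφ : 0 < F.toReal := ENNReal.toReal_pos hF0 hF
  rcases eq_or_ne G ⊤ with rfl | hG
  · have hC : ENNReal.ofReal ((s * M.toReal ^ (-(1 / s))) ^ (-(s / (s + 1)))) ≠ 0 := by
      rw [Ne, ENNReal.ofReal_eq_zero, not_le]; positivity
    have hFα : F ^ (1 - s / (s + 1)) ≠ 0 := by
      rw [Ne, ENNReal.rpow_eq_zero_iff]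
      exact fun h => h.elim (fun h => hF0 h.1) fun h => hF h.1
    rw [ENNReal.top_rpow_of_pos hα, ENNReal.mul_top hC, ENNReal.top_mul hFα]
    exact le_top
  rcases eq_or_ne G 0 with rfl | hG0
  · have hlim : Tendsto (fun R : ℝ => ENNReal.ofReal (1 / (s + 1)) *
        (ENNReal.ofReal R * 0 + F * (ENNReal.ofReal (R ^ (-s)) * M))) atTop (𝓝 0) := by
      have h1 : Tendsto (fun R : ℝ => ENNReal.ofReal (R ^ (-s))) atTop (𝓝 0) := by
        simpa using ENNReal.tendsto_ofReal (tendsto_rpow_neg_atTop hs)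
      have h2 := ENNReal.Tendsto.const_mul (a := ENNReal.ofReal (1 / (s + 1)))
        (ENNReal.Tendsto.const_mul (a := F)
          (ENNReal.Tendsto.mul_const h1 (Or.inr hM)) (Or.inr hF)) (Or.inr ENNReal.ofReal_ne_top)
      simpa using h2
    have hX : X ≤ 0 := ge_of_tendsto hlim ((eventually_gt_atTop 0).mono h)
    exact hX.trans zero_le
  have hg : 0 < G.toReal := ENNReal.toReal_pos hG0 hG
  obtain ⟨g, hg_def⟩ : ∃ g, g = G.toReal := ⟨_, rfl⟩
  obtain ⟨φ, hφ_def⟩ : ∃ φ, φ = F.toReal := ⟨_, rfl⟩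
  obtain ⟨m, hm_def⟩ : ∃ m, m = M.toReal := ⟨_, rfl⟩
  have eG : G = ENNReal.ofReal g := by rw [hg_def, ENNReal.ofReal_toReal hG]
  have eF : F = ENNReal.ofReal φ := by rw [hφ_def, ENNReal.ofReal_toReal hF]
  have eM : M = ENNReal.ofReal m := by rw [hm_def, ENNReal.ofReal_toReal hM]
  rw [← hg_def] at hg
  rw [← hφ_def] at hφ
  rw [← hm_def] at hm ⊢
  obtain ⟨R, hR_def⟩ : ∃ R, R = (s * φ * m / g) ^ (1 / (s + 1)) := ⟨_, rfl⟩
  have hR : 0 < R := by rw [hR_def]; positivity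
  have hlogR : Real.log R = (Real.log s + Real.log φ + Real.log m - Real.log g) / (s + 1) := by
    rw [hR_def, Real.log_rpow (by positivity), Real.log_div (by positivity) hg.ne',
      Real.log_mul (by positivity) hm.ne', Real.log_mul hs.ne' hφ.ne']
    ring
  have hRs : R ^ (-s) = R * g / (s * φ * m) := by
    refine Real.log_injOn_pos (mem_Ioi.2 (by positivity)) (mem_Ioi.2 (by positivity)) ?_
    rw [Real.log_rpow hR, Real.log_div (by positivity) (by positivity), Real.log_mul hR.ne' hg.ne',
      Real.log_mul (by positivity) hm.ne', Real.log_mul hs.ne' hφ.ne', hlogR]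
    field_simp
    ring
  refine (h R hR).trans ?_
  rw [eG, eF, eM, ENNReal.ofReal_rpow_of_pos hg, ENNReal.ofReal_rpow_of_pos hφ,
    ← ENNReal.ofReal_mul hR.le, ← ENNReal.ofReal_mul (by positivity),
    ← ENNReal.ofReal_mul hφ.le, ← ENNReal.ofReal_add (by positivity) (by positivity),
    ← ENNReal.ofReal_mul (by positivity), ← ENNReal.ofReal_mul (by positivity),
    ← ENNReal.ofReal_mul (by positivity)]
  refine ENNReal.ofReal_le_ofReal (le_of_eq ?_)
  have hval : 1 / (s + 1) * (R * g + φ * (R ^ (-s) * m)) = R * g / s := by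
    rw [hRs]
    field_simp
  rw [hval]
  refine Real.log_injOn_pos (mem_Ioi.2 (by positivity)) (mem_Ioi.2 (by positivity)) ?_
  rw [Real.log_div (by positivity) hs.ne', Real.log_mul hR.ne' hg.ne',
    Real.log_mul (by positivity) (by positivity), Real.log_mul (by positivity) (by positivity),
    Real.log_rpow (by positivity), Real.log_rpow hg, Real.log_rpow hφ,
    Real.log_mul hs.ne' (by positivity), Real.log_rpow hm, hlogR]
  field_simp
  ring

/-- Nash-type inequality for a locally-integrable `p`-homogeneous density,
`p ∈ (-1/n, 0)`, `1/q = 1/p + n`, `α = 1/(1-q)`: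
`‖f‖_{L¹(μ)} ≤ C₂ (∫‖∇f‖* dμ)^α ‖f‖_{L^∞(μ)}^{1-α}` for locally Lipschitz `f` with
`f(0) = 0`, where `‖∇f‖*(x) = limsup_{y→x} |f(y)-f(x)|/‖y-x‖`. -/
theorem stmt19 (n : ℕ) (hn : 1 ≤ n) (p q α C₁ C₂ : ℝ)
    (hp : p ∈ Set.Ioo (-(1 / (n : ℝ))) 0) (hq : 1 / q = 1 / p + (n : ℝ))
    (w : (Fin n → ℝ) → ℝ) (hwm : Measurable w) (hw0 : ∀ x, 0 ≤ w x)
    (hwhom : ∀ c : ℝ, 0 < c → ∀ x : Fin n → ℝ, x ≠ 0 → w (c • x) ^ p = c * w x ^ p)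
    (hwloc : LocallyIntegrableOn w {(0 : Fin n → ℝ)}ᶜ volume)
    (μ : Measure (Fin n → ℝ))
    (hμ : μ = volume.withDensity fun x => ENNReal.ofReal (w x))
    (N : (Fin n → ℝ) → ℝ) (hN0 : ∀ x, 0 ≤ N x) (hNpos : ∀ x, x ≠ 0 → 0 < N x)
    (hNadd : ∀ x y, N (x + y) ≤ N x + N y)
    (hNhom : ∀ c : ℝ, 0 ≤ c → ∀ x, N (c • x) = c * N x)
    (hα : α = 1 / (1 - q))
    (hC₁ : C₁ = -(1 / q) * (μ {x | 1 ≤ N x}).toReal ^ q)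
    (hC₂ : C₂ = C₁ ^ (-α))
    (f : (Fin n → ℝ) → ℝ) (hf : LocallyLipschitz f) (hf0 : f 0 = 0)
    (hfbdd : eLpNorm f ⊤ μ < ⊤) :
    ∫⁻ x, ENNReal.ofReal |f x| ∂μ ≤
      ENNReal.ofReal C₂ *
        (∫⁻ x, ENNReal.ofReal
          (Filter.limsup (fun y => |f y - f x| / N (y - x)) (𝓝[≠] x)) ∂μ) ^ α *
        eLpNorm f ⊤ μ ^ (1 - α) := by
  have : Nonempty (Fin n) := ⟨⟨0, hn⟩⟩
  have hp0 : p < 0 := hp.2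
  have hn0 : (0 : ℝ) < n := by exact_mod_cast hn
  obtain ⟨s, hs_def⟩ : ∃ s, s = -(1 / p) - (n : ℝ) := ⟨_, rfl⟩
  have hs : 0 < s := by
    have h1 : (n : ℝ) < -(1 / p) := by
      have h2 := hp.1
      rw [neg_lt, lt_div_iff₀ hn0] at h2
      rw [← div_neg, lt_div_iff₀ (neg_pos.2 hp0)]
      linarith
    linarith
  have hqs : 1 / q = -s := by rw [hq, hs_def]; ring
  have hq' : q = -(1 / s) := by rw [← one_div_one_div q, hqs, div_neg]
  have hα' : α = s / (s + 1) := by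
    rw [hα, hq', sub_neg_eq_add]
    field_simp
  have hNc := gauge_continuous hNadd hNhom
  have hNm : Measurable N := hNc.measurable
  have hμs : IsDilationHomogeneous μ s := by
    have h := isDilationHomogeneous_withDensity (volume : Measure (Fin n → ℝ)) hp0 hwm hw0 hwhom
    rwa [Module.finrank_fin_fun, ← hs_def, ← hμ] at h
  have hμ0 : μ {0} = 0 := by
    rw [hμ]
    exact withDensity_absolutelyContinuous _ _ (measure_singleton _)
  have hsf : SFinite μ := by rw [hμ]; infer_instance
  have hannulus : μ {x | N x ∈ Icc 1 2} < ⊤ := by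
    have hclosed : IsClosed {x | N x ∈ Icc (1 : ℝ) 2} := isClosed_Icc.preimage hNc
    obtain ⟨k, hk, hkN⟩ := exists_mul_norm_le_gauge hNc hNpos hNhom
    have hcpt : IsCompact {x | N x ∈ Icc (1 : ℝ) 2} := by
      refine (isCompact_closedBall (0 : Fin n → ℝ) (2 / k)).of_isClosed_subset hclosed fun x hx => ?_
      rw [mem_closedBall_zero_iff, le_div_iff₀ hk, mul_comm]
      exact (hkN x).trans hx.2
    have hsub : {x | N x ∈ Icc (1 : ℝ) 2} ⊆ {(0 : Fin n → ℝ)}ᶜ := by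
      rintro x hx rfl
      have h0 : N 0 = 0 := by simpa using hNhom 0 le_rfl 0
      have h1 : (1 : ℝ) ≤ N 0 := hx.1
      linarith
    have hint := (hwloc.mono_set hsub).integrableOn_isCompact hcpt
    rw [hμ, withDensity_apply _ hclosed.measurableSet]
    exact hint.lintegral_lt_top
  have hM := hμs.measure_gauge_ge_one_lt_top hs hNm hNhom hannulus
  have hlin := fun R hR => hμs.lintegral_abs_le hs hμ0 hNc hN0 hNpos hNhom hf hf0 (R := R) hR
  rcases eq_or_ne (eLpNorm f ⊤ μ) 0 with hF0 | hF0
  · have hf_ae := (eLpNorm_eq_zero_iff hf.continuous.aestronglyMeasurable ENNReal.top_ne_zero).1 hF0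
    refine le_of_eq_of_le ?_ zero_le
    rw [← lintegral_zero (μ := μ)]
    refine lintegral_congr_ae ?_
    filter_upwards [hf_ae] with x hx
    simp [hx]
  rcases eq_or_ne (μ {x | 1 ≤ N x}) 0 with hM0 | hM0
  · have hμ_zero : μ = 0 := by
      rw [← Measure.measure_univ_eq_zero]
      have hcover : (univ : Set (Fin n → ℝ)) ⊆
          {0} ∪ ⋃ k : ℕ, {x | 1 / ((k : ℝ) + 1) ≤ N x} := by
        intro x _
        rcases eq_or_ne x 0 with hx | hx
        · exact Or.inl hx
        · obtain ⟨k, hk⟩ := exists_nat_one_div_lt (hNpos x hx)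
          exact Or.inr (mem_iUnion.2 ⟨k, hk.le⟩)
      refine measure_mono_null hcover (measure_union_null hμ0 (measure_iUnion_null fun k => ?_))
      rw [hμs.measure_gauge_ge hNm hNhom (by positivity), hM0, mul_zero]
    simp [hμ_zero]
  have hC₂' : C₂ = (s * (μ {x | 1 ≤ N x}).toReal ^ (-(1 / s))) ^ (-(s / (s + 1))) := by
    rw [hC₂, hC₁, hqs, neg_neg, hq', hα']
  rw [hC₂', hα']
  exact le_of_forall_scale hs hF0 hfbdd.ne hM0 hM.ne hlin
end
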